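/- arXiv:2310.18819 — 2 statements merged into one kernel-verified Lean document; each statement's English description precedes it below -/
import Mathlib

section
/- For every natural number m ≥ 1, the ordered configuration space of m distinct points on the 4-sphere, i.e. the subspace of (S⁴)^m consisting of injective m-tuples (equivalently, the space {f : Fin m → S⁴ | f is injective} with the subspace topology of the product topology), is simply connected. -/
/-!
Normalizing each entry retracts the open set of tuples of nonzero vectors on pairwise distinct rays
onto the configuration space of the unit sphere, and retracts inherit simple connectedness. The
complement of this open set in `ι → E` has codimension at least `dim E - 1 ≥ 3`, so general position
applies: a loop may be taken to be `C¹`, and the cone over it with apex `c` is a two-parameter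
family of points. Hence the apexes for which the cone meets the complement form a set of codimension
at least one, and the cone from any other apex contracts the loop.
-/

open Filter Function Module Set Topology unitInterval
open scoped Convex

section Homotopy

variable {X Y : Type*} [TopologicalSpace X] [TopologicalSpace Y]

theorem simplyConnectedSpace_of_leftInverse [SimplyConnectedSpace Y] (i : C(X, Y)) (r : C(Y, X))
    (h : LeftInverse r i) : SimplyConnectedSpace X := by
  rw [simply_connected_iff_loops_nullhomotopic]
  refine ⟨h.surjective.pathConnectedSpace r.continuous, fun x γ ↦ ?_⟩
  have := ((SimplyConnectedSpace.paths_homotopic (γ.map i.continuous)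
    (Path.refl (i x))).map r).pathCast (h x).symm (h x).symm
  convert! this using 1 <;> ext s <;> simp [h _]

/-- The track `δ` of the base point conjugates `γ` to a constant loop, so `γ · δ ∼ δ`. -/
theorem path_homotopic_refl_of_homotopy_const {x c : X} (γ : Path x x)
    (H : γ.toContinuousMap.Homotopy (.const I c)) (hH : ∀ t, H (t, 0) = H (t, 1)) :
    γ.Homotopic (.refl x) := by
  let δ : Path x c := (H.evalAt 0).cast γ.source.symm rfl
  have conj : (γ.trans δ).Homotopic (δ.trans (.refl c)) := by
    have square := (Path.Homotopic.map_trans_evalAt H Path.id).pathCast γ.source.symm rfl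
    convert! square using 1
    ext s
    change (γ.trans δ) s = ((Path.id.map _).trans (H.evalAt 1)) s
    simp only [Path.trans_apply]
    split_ifs
    exacts [rfl, hH _]
  rw [← Path.Homotopic.Quotient.eq] at conj ⊢
  simp only [Path.Homotopic.Quotient.mk_trans, Path.Homotopic.Quotient.mk_refl,
    Path.Homotopic.Quotient.trans_refl] at conj ⊢
  simpa [Path.Homotopic.Quotient.trans_assoc] using
    congr_arg (·.trans (Path.Homotopic.Quotient.mk δ).symm) conj

end Homotopy

section Segments

variable {X E : Type*} [TopologicalSpace X] [AddCommGroup E] [Module ℝ E] [TopologicalSpace E]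
  [IsTopologicalAddGroup E] [ContinuousSMul ℝ E] {U : Set E}

/-- The straight-line homotopy between maps into `U` joined pointwise by segments inside `U`; this
is `ContinuousMap.Homotopy.affine` with values in the subtype. -/
noncomputable def homotopyOfSegmentSubset (f g : C(X, U))
    (h : ∀ x, [(f x : E) -[ℝ] g x] ⊆ U) : f.Homotopy g where
  toFun p := ⟨AffineMap.lineMap (f p.2 : E) (g p.2 : E) (p.1 : ℝ),
    h p.2 (lineMap_mem_segment ℝ _ _ p.1.2)⟩
  continuous_toFun := by
    simp only [AffineMap.lineMap_apply_module']
    fun_prop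
  map_zero_left x := by simp
  map_one_left x := by simp

theorem path_homotopic_of_segment_subset {x y : U} (γ γ' : Path x y)
    (h : ∀ s, [(γ s : E) -[ℝ] γ' s] ⊆ U) : γ.Homotopic γ' :=
  ⟨{ homotopyOfSegmentSubset γ.toContinuousMap γ'.toContinuousMap h with
      prop' := by
        rintro t s (rfl | rfl) <;> exact Subtype.ext (by simp [homotopyOfSegmentSubset]) }⟩

theorem path_homotopic_refl_of_segment_subset {x c : U} (γ : Path x x)
    (h : ∀ s, [(γ s : E) -[ℝ] c] ⊆ U) : γ.Homotopic (.refl x) :=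
  path_homotopic_refl_of_homotopy_const γ
    (homotopyOfSegmentSubset γ.toContinuousMap (.const I c) h) fun t ↦
      Subtype.ext <| show AffineMap.lineMap (γ 0 : E) (c : E) (t : ℝ) =
        AffineMap.lineMap (γ 1 : E) (c : E) (t : ℝ) by simp

end Segments

section Smoothing

variable {E : Type*} [NormedAddCommGroup E] [NormedSpace ℝ E]

theorem exists_contDiff_eq_bernsteinApproximation (f : C(I, E)) (n : ℕ) {k : WithTop ℕ∞} :
    ∃ q : ℝ → E, ContDiff ℝ k q ∧ ∀ s : I, q s = bernsteinApproximation n f s := by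
  refine ⟨fun s ↦ ∑ j : Fin (n + 1), (bernsteinPolynomial ℝ n j).eval s • f (bernstein.z j),
    ContDiff.sum fun j _ ↦ ?_, fun s ↦ by simp [bernsteinApproximation.apply, bernstein]⟩
  have : ContDiff ℝ k fun s : ℝ ↦ (bernsteinPolynomial ℝ n j).eval s := by
    simpa using (bernsteinPolynomial ℝ n j).contDiff_aeval (𝕜 := ℝ) k
  exact this.smul contDiff_const

theorem exists_contDiff_dist_lt (f : C(I, E)) {ε : ℝ} (hε : 0 < ε) {k : WithTop ℕ∞} :
    ∃ q : ℝ → E, ContDiff ℝ k q ∧ q 0 = f 0 ∧ q 1 = f 1 ∧ ∀ s : I, dist (q s) (f s) < ε := by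
  obtain ⟨n, hn, hn0⟩ := (((bernsteinApproximation_uniform f).eventually
    (Metric.ball_mem_nhds f hε)).and (eventually_ne_atTop 0)).exists
  obtain ⟨q, hq, hqf⟩ := exists_contDiff_eq_bernsteinApproximation f n (k := k)
  refine ⟨q, hq, by simpa using hqf 0, by simpa [hn0] using hqf 1, fun s ↦ ?_⟩
  rw [hqf]
  exact (ContinuousMap.dist_apply_le_dist s).trans_lt hn

theorem exists_contDiff_path_homotopic {U : Set E} (hU : IsOpen U) {x y : U} (γ : Path x y)
    {k : WithTop ℕ∞} :
    ∃ q : ℝ → E, ContDiff ℝ k q ∧ ∃ γ' : Path x y, (∀ s, (γ' s : E) = q s) ∧ γ.Homotopic γ' := by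
  let f : C(I, E) := ⟨fun s ↦ γ s, by fun_prop⟩
  obtain ⟨ε, hε, hεU⟩ := (isCompact_range f.continuous).exists_thickening_subset_open hU
    (range_subset_iff.2 fun s ↦ (γ s).2)
  obtain ⟨q, hq, hq0, hq1, hqf⟩ := exists_contDiff_dist_lt f hε (k := k)
  have hseg : ∀ s : I, [(γ s : E) -[ℝ] q s] ⊆ U := fun s ↦
    ((convex_ball (f s) ε).segment_subset (Metric.mem_ball_self hε) (hqf s)).trans
      ((Metric.ball_subset_thickening (mem_range_self s) ε).trans hεU)
  let γ' : Path x y :=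
    { toFun s := ⟨q s, hseg s (right_mem_segment ℝ _ _)⟩
      continuous_toFun := by
        have := hq.continuous
        exact Continuous.subtype_mk (by fun_prop) _
      source' := Subtype.ext (by simpa [f] using hq0)
      target' := Subtype.ext (by simpa [f] using hq1) }
  exact ⟨q, hq, γ', fun _ ↦ rfl, path_homotopic_of_segment_subset γ γ' hseg⟩

end Smoothing

section ConeApex

/-- `c` is the apex of a cone over the curve `p` all of whose points, except possibly those of `p`
itself, lie in `U`. Leaving out the curve makes apexes exist for any `C¹` curve in general position
arguments, whether or not it stays in `U`. -/
def IsConeApex {E : Type*} [AddCommGroup E] [Module ℝ E] (U : Set E) (p : ℝ → E) (c : E) : Prop :=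
  ∀ s, ∀ t ∈ Ioc (0 : ℝ) 1, AffineMap.lineMap (p s) c t ∈ U

namespace IsConeApex

variable {E : Type*} [AddCommGroup E] [Module ℝ E] {U : Set E} {p : ℝ → E} {c : E}

theorem apex_mem (h : IsConeApex U p c) : c ∈ U := by
  simpa using h 0 1 (by simp)

theorem segment_subset (h : IsConeApex U p c) {s : ℝ} (hs : p s ∈ U) : [p s -[ℝ] c] ⊆ U := by
  rw [segment_eq_image_lineMap]
  rintro _ ⟨t, ht, rfl⟩
  rcases ht.1.eq_or_lt with rfl | ht0
  · simpa using hs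
  · exact h s t ⟨ht0, ht.2⟩

end IsConeApex

variable {E : Type*} [NormedAddCommGroup E] [NormedSpace ℝ E] {U : Set E}

theorem isPathConnected_of_forall_exists_isConeApex
    (h : ∀ p : ℝ → E, ContDiff ℝ 1 p → ∃ c, IsConeApex U p c) : IsPathConnected U := by
  refine isPathConnected_iff.2 ⟨?_, fun x hx y hy ↦ ?_⟩
  · obtain ⟨c, hc⟩ := h 0 contDiff_const
    exact ⟨c, hc.apex_mem⟩
  · obtain ⟨c, hc⟩ := h (AffineMap.lineMap x y) (by fun_prop)
    have hxc : JoinedIn U x c :=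
      .of_segment_subset (by simpa using hc.segment_subset (s := 0) (by simpa))
    have hyc : JoinedIn U y c :=
      .of_segment_subset (by simpa using hc.segment_subset (s := 1) (by simpa))
    exact hxc.trans hyc.symm

theorem isSimplyConnected_of_forall_exists_isConeApex (hU : IsOpen U)
    (h : ∀ p : ℝ → E, ContDiff ℝ 1 p → ∃ c, IsConeApex U p c) : IsSimplyConnected U := by
  rw [IsSimplyConnected, simply_connected_iff_loops_nullhomotopic,
    ← isPathConnected_iff_pathConnectedSpace]
  refine ⟨isPathConnected_of_forall_exists_isConeApex h, fun x γ ↦ ?_⟩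
  obtain ⟨q, hq, γ', hγ', hγγ'⟩ := exists_contDiff_path_homotopic hU γ
  obtain ⟨c, hc⟩ := h q hq
  refine hγγ'.trans (path_homotopic_refl_of_segment_subset (c := ⟨c, hc.apex_mem⟩) γ' fun s ↦ ?_)
  rw [hγ']
  exact hc.segment_subset (hγ' s ▸ (γ' s).2)

end ConeApex

section GeneralPosition

variable {E κ : Type*} [NormedAddCommGroup E] [NormedSpace ℝ E] [Countable κ] {F : κ → Type*}
  [∀ a, NormedAddCommGroup (F a)] [∀ a, NormedSpace ℝ (F a)] [∀ a, FiniteDimensional ℝ (F a)]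
  {g : ∀ a, F a → E}

theorem dense_compl_iUnion_range_of_finrank_lt_finrank (hg : ∀ a, ContDiff ℝ 1 (g a))
    (hF : ∀ a, finrank ℝ (F a) < finrank ℝ E) : Dense (⋃ a, range (g a))ᶜ := by
  rcases isEmpty_or_nonempty κ with _ | ⟨⟨a₀⟩⟩
  · simp
  have hE : 0 < finrank ℝ E := (Nat.zero_le _).trans_lt (hF a₀)
  have : FiniteDimensional ℝ E := .of_finrank_pos hE
  refine dense_compl_of_dimH_lt_finrank ?_
  calc dimH (⋃ a, range (g a)) = ⨆ a, dimH (range (g a)) := dimH_iUnion _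
    _ ≤ (finrank ℝ E - 1 : ℕ) := iSup_le fun a ↦
      (hg a).dimH_range_le.trans (Nat.cast_le.2 (Nat.le_sub_one_of_lt (hF a)))
    _ < finrank ℝ E := Nat.cast_lt.2 (Nat.sub_one_lt hE.ne')

/-- The point at time `t` of the segment from `p s` to `c` is `z` exactly when `c` is the point at
time `t⁻¹` of the line from `p s` to `z`, so the apexes to avoid are `C¹` images of
`F a × ℝ × ℝ`. -/
theorem exists_isConeApex_of_compl_subset_iUnion_range {U : Set E}
    (hg : ∀ a, ContDiff ℝ 1 (g a)) (hF : ∀ a, finrank ℝ (F a) + 2 < finrank ℝ E)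
    (hU : Uᶜ ⊆ ⋃ a, range (g a)) {p : ℝ → E} (hp : ContDiff ℝ 1 p) : ∃ c, IsConeApex U p c := by
  let G (a : κ) (w : F a × ℝ × ℝ) : E := AffineMap.lineMap (p w.2.1) (g a w.1) w.2.2
  have hG (a : κ) : ContDiff ℝ 1 (G a) := by
    have := hg a
    simp only [G, AffineMap.lineMap_apply_module']
    fun_prop
  obtain ⟨c, hc⟩ := (dense_compl_iUnion_range_of_finrank_lt_finrank hG
    (fun a ↦ by simpa [finrank_prod] using hF a)).nonempty
  refine ⟨c, fun s t ht ↦ by_contra fun hst ↦ hc ?_⟩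
  obtain ⟨a, z, hz⟩ := mem_iUnion.1 (hU hst)
  refine mem_iUnion.2 ⟨a, (z, s, t⁻¹), ?_⟩
  simp [G, hz, AffineMap.lineMap_lineMap_right, inv_mul_cancel₀ ht.1.ne']

theorem isSimplyConnected_of_compl_subset_iUnion_range {U : Set E} (hUo : IsOpen U)
    (hg : ∀ a, ContDiff ℝ 1 (g a)) (hF : ∀ a, finrank ℝ (F a) + 2 < finrank ℝ E)
    (hU : Uᶜ ⊆ ⋃ a, range (g a)) : IsSimplyConnected U :=
  isSimplyConnected_of_forall_exists_isConeApex hUo fun _ hp ↦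
    exists_isConeApex_of_compl_subset_iUnion_range hg hF hU hp

end GeneralPosition

section DistinctRays

variable (ι E : Type*) [NormedAddCommGroup E] [NormedSpace ℝ E]

/-- The tuples of nonzero vectors lying on pairwise distinct rays: a thickening, open in `ι → E`, of
the configuration space of the unit sphere of `E`. -/
def distinctRays : Set (ι → E) :=
  {x | (∀ i, x i ≠ 0) ∧ Pairwise fun i j ↦ ¬SameRay ℝ (x i) (x j)}

variable {ι E}

theorem isOpen_distinctRays [Finite ι] : IsOpen (distinctRays ι E) := by
  simp only [distinctRays, Pairwise, sameRay_iff_norm_smul_eq, ofPred_and, ofPred_forall]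
  refine (isOpen_iInter_of_finite fun i ↦ ?_).inter (isOpen_iInter_of_finite fun i ↦
    isOpen_iInter_of_finite fun j ↦ isOpen_iInter_of_finite fun _ ↦ ?_) <;>
  exact isOpen_ne_fun (by fun_prop) (by fun_prop)

/-- The linear parametrization of the tuples whose entry `i` is a multiple of entry `j`, or zero if
`i = j`: the `i`-th entry of `w.1` vanishes and is replaced by `w.2` times the `j`-th. -/
def smulEntry [DecidableEq ι] (i j : ι) (w : (LinearMap.proj i : (ι → E) →ₗ[ℝ] E).ker × ℝ) :
    ι → E :=
  (w.1 : ι → E) + Pi.single i (w.2 • (w.1 : ι → E) j)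

theorem contDiff_smulEntry [Fintype ι] [DecidableEq ι] (i j : ι) {k : WithTop ℕ∞} :
    ContDiff ℝ k (smulEntry (E := E) i j) := by
  have hw : ContDiff ℝ k fun w : (LinearMap.proj i : (ι → E) →ₗ[ℝ] E).ker × ℝ ↦ (w.1 : ι → E) :=
    (LinearMap.ker (LinearMap.proj i : (ι → E) →ₗ[ℝ] E)).subtypeL.contDiff.comp contDiff_fst
  exact hw.add ((ContinuousLinearMap.single ℝ (fun _ : ι ↦ E) i).contDiff.comp
    (contDiff_snd.smul (contDiff_pi.1 hw j)))

theorem mem_range_smulEntry_of_eq_zero [DecidableEq ι] {x : ι → E} {i : ι} (h : x i = 0) :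
    x ∈ range (smulEntry i i) :=
  ⟨(⟨x, h⟩, 0), by simp [smulEntry]⟩

theorem mem_range_smulEntry_of_eq_smul [DecidableEq ι] {x : ι → E} {i j : ι} (hij : i ≠ j) {μ : ℝ}
    (h : x i = μ • x j) : x ∈ range (smulEntry i j) :=
  ⟨(⟨x - Pi.single i (x i), by simp⟩, μ), by simp [smulEntry, hij.symm, ← h]⟩

theorem compl_distinctRays_subset_iUnion_range_smulEntry [DecidableEq ι] :
    (distinctRays ι E)ᶜ ⊆ ⋃ a : ι × ι, range (smulEntry (E := E) a.1 a.2) := by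
  intro x hx
  simp only [mem_iUnion, Prod.exists]
  by_contra! hrange
  have hne (i : ι) : x i ≠ 0 := fun h ↦ hrange i i (mem_range_smulEntry_of_eq_zero h)
  refine hx ⟨hne, fun i j hij hray ↦ ?_⟩
  obtain ⟨μ, -, hμ⟩ := hray.exists_nonneg_right (hne j)
  exact hrange i j (mem_range_smulEntry_of_eq_smul hij hμ)

theorem finrank_ker_proj_add_finrank [Finite ι] [FiniteDimensional ℝ E] (i : ι) :
    finrank ℝ (LinearMap.proj i : (ι → E) →ₗ[ℝ] E).ker + finrank ℝ E = finrank ℝ (ι → E) := by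
  have := (LinearMap.proj i : (ι → E) →ₗ[ℝ] E).finrank_range_add_finrank_ker
  rwa [LinearMap.range_eq_top.2 (LinearMap.proj_surjective i), finrank_top, add_comm] at this

theorem isSimplyConnected_distinctRays [Finite ι] (hE : 3 < finrank ℝ E) :
    IsSimplyConnected (distinctRays ι E) := by
  classical
  cases nonempty_fintype ι
  have : FiniteDimensional ℝ E := .of_finrank_pos (by lia)
  refine isSimplyConnected_of_compl_subset_iUnion_range isOpen_distinctRays
    (fun a : ι × ι ↦ contDiff_smulEntry a.1 a.2) (fun a ↦ ?_)
    compl_distinctRays_subset_iUnion_range_smulEntry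
  have := finrank_ker_proj_add_finrank (E := E) a.1
  rw [finrank_prod, finrank_self]
  lia

end DistinctRays

section Configurations

variable {ι E : Type*} [NormedAddCommGroup E] [NormedSpace ℝ E]

theorem coe_mem_distinctRays {f : ι → Metric.sphere (0 : E) 1} (hf : Injective f) :
    (fun i ↦ (f i : E)) ∈ distinctRays ι E := by
  refine ⟨fun i ↦ ne_zero_of_mem_unit_sphere (f i), fun i j hij ↦ ?_⟩
  refine (not_sameRay_iff_of_norm_eq (by simp)).2 ?_
  exact Subtype.coe_injective.ne (hf.ne hij)

theorem injective_normalize_of_mem_distinctRays {x : ι → E} (hx : x ∈ distinctRays ι E) :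
    Injective fun i ↦ NormedSpace.normalize (x i) := fun i j hij ↦
  by_contra fun hne ↦ hx.2 hne ((sameRay_iff_inv_norm_smul_eq_of_ne (hx.1 i) (hx.1 j)).2 hij)

/-- The inclusion of the configuration space of the unit sphere into its open thickening. -/
def configurationInclusion :
    C({f : ι → Metric.sphere (0 : E) 1 // Injective f}, distinctRays ι E) where
  toFun f := ⟨fun i ↦ f.1 i, coe_mem_distinctRays f.2⟩
  continuous_toFun := by
    refine .subtype_mk (continuous_pi fun i ↦ ?_) _
    exact continuous_subtype_val.comp ((continuous_apply i).comp continuous_subtype_val)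

/-- The retraction onto the configuration space of the unit sphere, normalizing all entries. -/
noncomputable def configurationRetraction :
    C(distinctRays ι E, {f : ι → Metric.sphere (0 : E) 1 // Injective f}) where
  toFun x := ⟨fun i ↦ ⟨NormedSpace.normalize (x.1 i), by simpa using x.2.1 i⟩, fun _ _ h ↦
    injective_normalize_of_mem_distinctRays x.2 (congrArg Subtype.val h)⟩
  continuous_toFun := by
    refine .subtype_mk (continuous_pi fun i ↦ .subtype_mk ?_ _) _
    have hi : Continuous fun x : distinctRays ι E ↦ x.1 i :=
      (continuous_apply i).comp continuous_subtype_val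
    exact (hi.norm.inv₀ fun x ↦ norm_ne_zero_iff.2 (x.2.1 i)).smul hi

theorem leftInverse_configurationRetraction :
    LeftInverse (configurationRetraction (ι := ι) (E := E)) configurationInclusion := by
  intro f
  ext i
  exact NormedSpace.normalize_eq_self_of_norm_eq_one (norm_eq_of_mem_sphere _)

theorem configuration_space_of_sphere_simply_connected_general [Finite ι]
    (hE : 3 < finrank ℝ E) :
    SimplyConnectedSpace {f : ι → Metric.sphere (0 : E) 1 // Injective f} :=
  have := (isSimplyConnected_distinctRays (ι := ι) hE).simplyConnectedSpace
  simplyConnectedSpace_of_leftInverse _ _ leftInverse_configurationRetraction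

end Configurations

/-- The ordered configuration space of `m ≥ 1` distinct points on the 4-sphere
(the subspace of `(S⁴)^m` of injective tuples) is simply connected. -/
theorem configuration_space_of_sphere_simply_connected (m : ℕ) (hm : 1 ≤ m) :
    SimplyConnectedSpace
      {f : Fin m → (Metric.sphere (0 : EuclideanSpace ℝ (Fin 5)) 1) // Function.Injective f} :=
  configuration_space_of_sphere_simply_connected_general (by simp)
end

section
/- Let n be a natural number. The group of ℤ-linear automorphisms of Fin n → ℤ that preserve the standard dot product has cardinality 2ⁿ · n!. -/
/-!
A map `f` preserving the dot product sends each standard basis vector `e j` to a vector of norm `1`.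
In an ordered ring with nothing strictly between `0` and `1`, which `SuccAddOrder` encodes, such a
vector is `± e i` for some `i`; write `f (e j) = u j • e (τ j)`. Pairing an arbitrary `f x` with
`f (e j)` gives `f x (τ j) = u j • x j`, so that `τ` is injective and `f` is the signed permutation
with signs `u` and permutation `τ`.
-/

variable {ι R : Type*}

section SignedPerm

variable [Ring R]

variable (R) in
/-- The signed permutation `e i ↦ ε i • e (σ i)` of `ι → R`, an element of the hyperoctahedral
group on `ι`. Signs are taken in `ℤˣ`, so that there are two of them whatever the units of `R`. -/
def signedPerm (ε : ι → ℤˣ) (σ : Equiv.Perm ι) : (ι → R) ≃ₗ[R] (ι → R) :=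
  LinearEquiv.piCongrRight (fun i => DistribMulAction.toLinearEquiv R R (ε i)) ≪≫ₗ
    LinearEquiv.funCongrLeft R R σ.symm

lemma signedPerm_apply_perm (ε : ι → ℤˣ) (σ : Equiv.Perm ι) (x : ι → R) (i : ι) :
    signedPerm R ε σ x (σ i) = ε i • x i := by
  simp [signedPerm, LinearEquiv.funCongrLeft_apply, LinearMap.funLeft_apply]

lemma signedPerm_dotProduct_signedPerm [Fintype ι] (ε : ι → ℤˣ) (σ : Equiv.Perm ι) (x y : ι → R) :
    signedPerm R ε σ x ⬝ᵥ signedPerm R ε σ y = x ⬝ᵥ y := by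
  rw [dotProduct, ← Equiv.sum_comp σ]
  simp only [signedPerm_apply_perm, smul_mul_smul_comm, Int.units_mul_self, one_smul, dotProduct]

lemma eq_and_eq_of_forall_units_smul_apply_eq [CharZero R] {i j : ι} {u v : ℤˣ}
    (h : ∀ x : ι → R, u • x i = v • x j) : i = j ∧ u = v := by
  classical
  have hsingle := h (Pi.single i 1)
  rw [Pi.single_eq_same] at hsingle
  obtain rfl : i = j := by
    by_contra hij
    rw [Pi.single_eq_of_ne' hij, smul_zero, smul_eq_zero_iff_eq] at hsingle
    exact one_ne_zero hsingle
  simp only [Pi.single_eq_same, Units.smul_def, zsmul_one, Int.cast_inj] at hsingle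
  exact ⟨rfl, Units.ext hsingle⟩

lemma signedPerm_injective [CharZero R] :
    Function.Injective fun p : (ι → ℤˣ) × Equiv.Perm ι => signedPerm R p.1 p.2 := by
  rintro ⟨ε, σ⟩ ⟨ε', σ'⟩ h
  have hσε (i : ι) : σ i = σ' i ∧ ε i = ε' i := by
    obtain ⟨j, hj⟩ := σ'.surjective (σ i)
    have hcoord (x : ι → R) : ε i • x i = ε' j • x j := by
      rw [← signedPerm_apply_perm ε σ, ← signedPerm_apply_perm ε' σ', hj]
      exact congrFun (LinearEquiv.congr_fun h x) (σ i)
    obtain ⟨rfl, hε⟩ := eq_and_eq_of_forall_units_smul_apply_eq hcoord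
    exact ⟨hj.symm, hε⟩
  exact Prod.ext (funext fun i => (hσε i).2) (Equiv.ext fun i => (hσε i).1)

end SignedPerm

section DiscretelyOrdered

variable [Fintype ι] [Ring R] [LinearOrder R] [IsStrictOrderedRing R] [SuccAddOrder R]

lemma exists_eq_units_smul_single_of_dotProduct_self_eq_one [DecidableEq ι] {v : ι → R}
    (hv : v ⬝ᵥ v = 1) : ∃ (i : ι) (u : ℤˣ), v = u • Pi.single i 1 := by
  obtain ⟨i, hi⟩ : ∃ i, v i ≠ 0 := by
    by_contra! h
    simp [dotProduct, h] at hv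
  have hone_le : 1 ≤ v i * v i := Order.one_le_iff_pos.mpr (mul_self_pos.mpr hi)
  have hsplit : v i * v i + ∑ k ∈ Finset.univ.erase i, v k * v k = 1 :=
    (Finset.add_sum_erase _ (fun k => v k * v k) (Finset.mem_univ i)).trans hv
  have hrest : ∑ k ∈ Finset.univ.erase i, v k * v k = 0 :=
    le_antisymm ((add_le_iff_nonpos_right _).mp (hsplit.trans_le hone_le))
      (Finset.sum_nonneg fun k _ => mul_self_nonneg (v k))
  have hvi_sq : v i * v i = 1 := by rwa [hrest, add_zero] at hsplit
  have hv_single : v = Pi.single i (v i) := by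
    rw [Finset.sum_eq_zero_iff_of_nonneg fun k _ => mul_self_nonneg (v k)] at hrest
    ext k
    obtain rfl | hk := eq_or_ne k i
    · rw [Pi.single_eq_same]
    · rw [Pi.single_eq_of_ne hk]
      exact mul_self_eq_zero.mp (hrest k (Finset.mem_erase.mpr ⟨hk, Finset.mem_univ k⟩))
  obtain hvi | hvi := mul_self_eq_one_iff.mp hvi_sq
  · exact ⟨i, 1, by rw [one_smul, ← hvi, ← hv_single]⟩
  · exact ⟨i, -1, by rw [Units.neg_smul, one_smul, ← Pi.single_neg, ← hvi, ← hv_single]⟩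

lemma exists_eq_signedPerm_of_dotProduct_eq {f : (ι → R) → (ι → R)}
    (hf : ∀ x y, f x ⬝ᵥ f y = x ⬝ᵥ y) :
    ∃ (ε : ι → ℤˣ) (σ : Equiv.Perm ι), f = signedPerm R ε σ := by
  classical
  have hbasis (j : ι) : ∃ (i : ι) (u : ℤˣ), f (Pi.single j 1) = u • Pi.single i 1 :=
    exists_eq_units_smul_single_of_dotProduct_self_eq_one
      (by rw [hf, dotProduct_single_one, Pi.single_eq_same])
  choose τ u hτ using hbasis
  have hcoord (x : ι → R) (j : ι) : f x (τ j) = u j • x j := by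
    have hpair : u j • f x (τ j) = x j :=
      calc
        u j • f x (τ j) = f x ⬝ᵥ f (Pi.single j 1) := by
          rw [hτ, dotProduct_smul, dotProduct_single_one]
        _ = x j := by rw [hf, dotProduct_single_one]
    rw [← hpair, smul_smul, Int.units_mul_self, one_smul]
  have hτ_inj : Function.Injective τ := fun j k hjk =>
    (eq_and_eq_of_forall_units_smul_apply_eq fun x => by rw [← hcoord, ← hcoord, hjk]).1
  let σ : Equiv.Perm ι := Equiv.ofBijective τ (Finite.injective_iff_bijective.mp hτ_inj)
  refine ⟨u, σ, funext fun x => funext fun i => ?_⟩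
  obtain ⟨j, rfl⟩ := σ.surjective i
  rw [signedPerm_apply_perm]
  exact hcoord x j

lemma forall_dotProduct_eq_iff_mem_range_signedPerm (φ : (ι → R) ≃ₗ[R] (ι → R)) :
    (∀ x y, φ x ⬝ᵥ φ y = x ⬝ᵥ y) ↔
      φ ∈ Set.range fun p : (ι → ℤˣ) × Equiv.Perm ι => signedPerm R p.1 p.2 := by
  constructor
  · intro hφ
    obtain ⟨ε, σ, h⟩ := exists_eq_signedPerm_of_dotProduct_eq hφ
    exact ⟨(ε, σ), DFunLike.coe_injective h.symm⟩
  · rintro ⟨⟨ε, σ⟩, rfl⟩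
    exact signedPerm_dotProduct_signedPerm ε σ

variable (ι R) in
theorem card_isometries_standard_lattice_general :
    Nat.card {φ : (ι → R) ≃ₗ[R] (ι → R) // ∀ x y : ι → R, φ x ⬝ᵥ φ y = x ⬝ᵥ y}
      = 2 ^ Fintype.card ι * (Fintype.card ι).factorial := by
  classical
  calc
    _ = Nat.card (Set.range fun p : (ι → ℤˣ) × Equiv.Perm ι => signedPerm R p.1 p.2) :=
      Nat.card_congr (Equiv.subtypeEquivRight forall_dotProduct_eq_iff_mem_range_signedPerm)
    _ = Nat.card ((ι → ℤˣ) × Equiv.Perm ι) := Nat.card_range_of_injective signedPerm_injective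
    _ = 2 ^ Fintype.card ι * (Fintype.card ι).factorial := by
      simp [Nat.card_eq_fintype_card, Fintype.card_perm]

end DiscretelyOrdered

/-- The group of `ℤ`-linear automorphisms of `Fin n → ℤ` preserving the standard dot product
(the hyperoctahedral group) has cardinality `2ⁿ · n!`. -/
theorem card_isometries_standard_lattice (n : ℕ) :
    Nat.card {φ : (Fin n → ℤ) ≃ₗ[ℤ] (Fin n → ℤ) //
        ∀ x y : Fin n → ℤ, ∑ i, φ x i * φ y i = ∑ i, x i * y i}
      = 2 ^ n * n.factorial := by
  simpa [dotProduct] using card_isometries_standard_lattice_general (Fin n) ℤ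
end
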